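/- Let K be a field. If the matrix multiplication tensor ⟨6,6,6⟩ is a restriction of the direct sum 137 ⊙ ⟨1⟩ ⊕ 8 ⊙ ⟨1,1,2⟩, then the matrix multiplication tensor ⟨216,216,216⟩ is a restriction of the unit tensor ⟨3581065⟩. -/

import Mathlib

open TensorProduct

noncomputable section

section Defs

variable (K : Type) [Field K]
variable {U₁ U₂ U₃ V₁ V₂ V₃ W₁ W₂ W₃ : Type}
variable [AddCommGroup U₁] [Module K U₁] [AddCommGroup U₂] [Module K U₂]
  [AddCommGroup U₃] [Module K U₃]
variable [AddCommGroup V₁] [Module K V₁] [AddCommGroup V₂] [Module K V₂]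
  [AddCommGroup V₃] [Module K V₃]
variable [AddCommGroup W₁] [Module K W₁] [AddCommGroup W₂] [Module K W₂]
  [AddCommGroup W₃] [Module K W₃]

/-- `T` is a restriction of `T'` (written `T ≤ T'` in the paper): there are linear maps
`φᵢ` with `T = (φ₁ ⊗ φ₂ ⊗ φ₃)(T')`. -/
def IsRestriction (T : U₁ ⊗[K] (U₂ ⊗[K] U₃)) (T' : V₁ ⊗[K] (V₂ ⊗[K] V₃)) : Prop :=
  ∃ (φ₁ : V₁ →ₗ[K] U₁) (φ₂ : V₂ →ₗ[K] U₂) (φ₃ : V₃ →ₗ[K] U₃),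
    T = TensorProduct.map φ₁ (TensorProduct.map φ₂ φ₃) T'

/-- Direct sum of two order-3 tensors, via the canonical inclusions. -/
def dsum (T₁ : U₁ ⊗[K] (U₂ ⊗[K] U₃)) (T₂ : W₁ ⊗[K] (W₂ ⊗[K] W₃)) :
    (U₁ × W₁) ⊗[K] ((U₂ × W₂) ⊗[K] (U₃ × W₃)) :=
  TensorProduct.map (LinearMap.inl K U₁ W₁)
      (TensorProduct.map (LinearMap.inl K U₂ W₂) (LinearMap.inl K U₃ W₃)) T₁
    + TensorProduct.map (LinearMap.inr K U₁ W₁)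
      (TensorProduct.map (LinearMap.inr K U₂ W₂) (LinearMap.inr K U₃ W₃)) T₂

/-- Kronecker product of two order-3 tensors, via the canonical reassociation. -/
def kron (T₁ : U₁ ⊗[K] (U₂ ⊗[K] U₃)) (T₂ : W₁ ⊗[K] (W₂ ⊗[K] W₃)) :
    (U₁ ⊗[K] W₁) ⊗[K] ((U₂ ⊗[K] W₂) ⊗[K] (U₃ ⊗[K] W₃)) :=
  (TensorProduct.congr (LinearEquiv.refl K (U₁ ⊗[K] W₁))
      (TensorProduct.tensorTensorTensorComm K U₂ U₃ W₂ W₃))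
    ((TensorProduct.tensorTensorTensorComm K U₁ (U₂ ⊗[K] U₃) W₁ (W₂ ⊗[K] W₃))
      (T₁ ⊗ₜ[K] T₂))

/-- `k ⊙ T`: the direct sum of `k` copies of `T`, via the canonical inclusions
into the `k`-fold products. -/
def copies (k : ℕ) (T : U₁ ⊗[K] (U₂ ⊗[K] U₃)) :
    (Fin k → U₁) ⊗[K] ((Fin k → U₂) ⊗[K] (Fin k → U₃)) :=
  ∑ i : Fin k,
    TensorProduct.map (LinearMap.single K (fun _ : Fin k => U₁) i)
      (TensorProduct.map (LinearMap.single K (fun _ : Fin k => U₂) i)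
        (LinearMap.single K (fun _ : Fin k => U₃) i)) T

end Defs

/-- The matrix multiplication tensor `⟨n,m,p⟩`. -/
def matMulTensor (K : Type) [Field K] (n m p : ℕ) :
    Matrix (Fin n) (Fin m) K ⊗[K]
      (Matrix (Fin m) (Fin p) K ⊗[K] Matrix (Fin p) (Fin n) K) :=
  ∑ i : Fin n, ∑ j : Fin m, ∑ k : Fin p,
    Matrix.single i j (1 : K) ⊗ₜ[K]
      (Matrix.single j k (1 : K) ⊗ₜ[K] Matrix.single k i (1 : K))

/-- The unit tensor `⟨r⟩`. -/
def unitTensor (K : Type) [Field K] (r : ℕ) :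
    (Fin r → K) ⊗[K] ((Fin r → K) ⊗[K] (Fin r → K)) :=
  ∑ i : Fin r,
    Pi.single i (1 : K) ⊗ₜ[K] (Pi.single i (1 : K) ⊗ₜ[K] Pi.single i (1 : K))

end

/-!
The restriction splits `⟨6,6,6⟩` as `A + B`, where `A` has rank at most `m = 137` and `B` is a sum
of `k = 8` restrictions of `⟨1,1,2⟩`, hence has rank at most `2k`. Expand the Kronecker product of
the three cyclic shifts of `A + B` into eight terms. Submultiplicativity of rank bounds the seven
terms involving `A` by `m³ + 3m²(2k) + 3m(2k)²`. The remaining term is a sum of `k³` restrictions of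
the product of `⟨1,1,2⟩`, `⟨1,2,1⟩` and `⟨2,1,1⟩`, which is `⟨2,2,2⟩`, so that Strassen's algorithm
bounds it by `7k³` instead of the trivial `8k³`.
-/

section Restriction

variable {K : Type} [Field K]
variable {U₁ U₂ U₃ V₁ V₂ V₃ W₁ W₂ W₃ X₁ X₂ X₃ : Type}
variable [AddCommGroup U₁] [Module K U₁] [AddCommGroup U₂] [Module K U₂]
  [AddCommGroup U₃] [Module K U₃]
variable [AddCommGroup V₁] [Module K V₁] [AddCommGroup V₂] [Module K V₂]
  [AddCommGroup V₃] [Module K V₃]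
variable [AddCommGroup W₁] [Module K W₁] [AddCommGroup W₂] [Module K W₂]
  [AddCommGroup W₃] [Module K W₃]
variable [AddCommGroup X₁] [Module K X₁] [AddCommGroup X₂] [Module K X₂]
  [AddCommGroup X₃] [Module K X₃]

theorem isRestriction_map (φ₁ : V₁ →ₗ[K] U₁) (φ₂ : V₂ →ₗ[K] U₂) (φ₃ : V₃ →ₗ[K] U₃)
    (T : V₁ ⊗[K] (V₂ ⊗[K] V₃)) :
    IsRestriction K (TensorProduct.map φ₁ (TensorProduct.map φ₂ φ₃) T) T :=
  ⟨φ₁, φ₂, φ₃, rfl⟩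

theorem isRestriction_refl (T : U₁ ⊗[K] (U₂ ⊗[K] U₃)) : IsRestriction K T T :=
  ⟨.id, .id, .id, by simp only [TensorProduct.map_id, LinearMap.id_apply]⟩

theorem IsRestriction.trans {T : U₁ ⊗[K] (U₂ ⊗[K] U₃)} {S : V₁ ⊗[K] (V₂ ⊗[K] V₃)}
    {R : W₁ ⊗[K] (W₂ ⊗[K] W₃)} (hTS : IsRestriction K T S) (hSR : IsRestriction K S R) :
    IsRestriction K T R := by
  obtain ⟨φ₁, φ₂, φ₃, rfl⟩ := hTS
  obtain ⟨ψ₁, ψ₂, ψ₃, rfl⟩ := hSR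
  exact ⟨φ₁ ∘ₗ ψ₁, φ₂ ∘ₗ ψ₂, φ₃ ∘ₗ ψ₃, by simp only [TensorProduct.map_comp, LinearMap.comp_apply]⟩

theorem IsRestriction.exists_add_of_dsum {T : U₁ ⊗[K] (U₂ ⊗[K] U₃)}
    {S : V₁ ⊗[K] (V₂ ⊗[K] V₃)} {S' : W₁ ⊗[K] (W₂ ⊗[K] W₃)}
    (h : IsRestriction K T (dsum K S S')) :
    ∃ A B, T = A + B ∧ IsRestriction K A S ∧ IsRestriction K B S' := by
  obtain ⟨φ₁, φ₂, φ₃, rfl⟩ := h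
  exact ⟨_, _, map_add _ _ _, (isRestriction_map _ _ _ _).trans (isRestriction_map _ _ _ _),
    (isRestriction_map _ _ _ _).trans (isRestriction_map _ _ _ _)⟩

/-- The relation `T ≤ k ⊙ S`, expressed without leaving the ambient space of `T`: the tensor `T` is
a sum of `k` restrictions of `S`. -/
def IsSumRestriction (k : ℕ) (T : U₁ ⊗[K] (U₂ ⊗[K] U₃)) (S : V₁ ⊗[K] (V₂ ⊗[K] V₃)) : Prop :=
  ∃ F : Fin k → U₁ ⊗[K] (U₂ ⊗[K] U₃), T = ∑ i, F i ∧ ∀ i, IsRestriction K (F i) S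

theorem IsRestriction.isSumRestriction_of_copies {T : U₁ ⊗[K] (U₂ ⊗[K] U₃)}
    {S : V₁ ⊗[K] (V₂ ⊗[K] V₃)} {k : ℕ} (h : IsRestriction K T (copies K k S)) :
    IsSumRestriction k T S := by
  obtain ⟨φ₁, φ₂, φ₃, rfl⟩ := h
  exact ⟨_, map_sum _ _ _, fun _ ↦ (isRestriction_map _ _ _ _).trans (isRestriction_map _ _ _ _)⟩

theorem isSumRestriction_sum {ι : Type*} [Fintype ι] {k : ℕ} {F : ι → U₁ ⊗[K] (U₂ ⊗[K] U₃)}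
    {S : V₁ ⊗[K] (V₂ ⊗[K] V₃)} (hk : Fintype.card ι = k) (h : ∀ i, IsRestriction K (F i) S) :
    IsSumRestriction k (∑ i, F i) S :=
  ⟨F ∘ (Fintype.equivFinOfCardEq hk).symm, (Equiv.sum_comp _ F).symm, fun _ ↦ h _⟩

theorem IsSumRestriction.add {T T' : U₁ ⊗[K] (U₂ ⊗[K] U₃)} {S : V₁ ⊗[K] (V₂ ⊗[K] V₃)} {k l : ℕ}
    (hT : IsSumRestriction k T S) (hT' : IsSumRestriction l T' S) :
    IsSumRestriction (k + l) (T + T') S := by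
  obtain ⟨F, rfl, hF⟩ := hT
  obtain ⟨G, rfl, hG⟩ := hT'
  have h := isSumRestriction_sum (k := k + l) (F := Sum.elim F G) (by simp) (Sum.forall.2 ⟨hF, hG⟩)
  rwa [Fintype.sum_sum_type] at h

theorem IsSumRestriction.trans {T : U₁ ⊗[K] (U₂ ⊗[K] U₃)} {S : V₁ ⊗[K] (V₂ ⊗[K] V₃)}
    {R : W₁ ⊗[K] (W₂ ⊗[K] W₃)} {k l : ℕ} (hTS : IsSumRestriction k T S)
    (hSR : IsSumRestriction l S R) : IsSumRestriction (k * l) T R := by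
  obtain ⟨F, rfl, hF⟩ := hTS
  obtain ⟨G, rfl, hG⟩ := hSR
  choose φ₁ φ₂ φ₃ hφ using hF
  simp_rw [hφ, map_sum, ← Fintype.sum_prod_type']
  exact isSumRestriction_sum (by simp) fun p ↦ (isRestriction_map _ _ _ _).trans (hG p.2)

theorem isRestriction_tmul_unitTensor_one (u : U₁) (v : U₂) (w : U₃) :
    IsRestriction K (u ⊗ₜ[K] (v ⊗ₜ[K] w)) (unitTensor K 1) :=
  ⟨Fintype.linearCombination K fun _ ↦ u, Fintype.linearCombination K fun _ ↦ v,
    Fintype.linearCombination K fun _ ↦ w, by simp [unitTensor]⟩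

theorem isRestriction_unitTensor_iff {T : U₁ ⊗[K] (U₂ ⊗[K] U₃)} {r : ℕ} :
    IsRestriction K T (unitTensor K r) ↔ IsSumRestriction r T (unitTensor K 1) := by
  constructor
  · rintro ⟨φ₁, φ₂, φ₃, rfl⟩
    simp only [unitTensor, map_sum, TensorProduct.map_tmul]
    exact isSumRestriction_sum (Fintype.card_fin r) fun _ ↦
      isRestriction_tmul_unitTensor_one _ _ _
  · rintro ⟨F, rfl, hF⟩
    choose φ₁ φ₂ φ₃ hφ using hF
    refine ⟨Fintype.linearCombination K fun i ↦ φ₁ i (Pi.single 0 1),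
      Fintype.linearCombination K fun i ↦ φ₂ i (Pi.single 0 1),
      Fintype.linearCombination K fun i ↦ φ₃ i (Pi.single 0 1), ?_⟩
    simp [unitTensor, hφ]

theorem kron_tmul (a : U₁) (b : U₂) (c : U₃) (a' : W₁) (b' : W₂) (c' : W₃) :
    kron K (a ⊗ₜ[K] (b ⊗ₜ[K] c)) (a' ⊗ₜ[K] (b' ⊗ₜ[K] c')) =
      (a ⊗ₜ[K] a') ⊗ₜ[K] ((b ⊗ₜ[K] b') ⊗ₜ[K] (c ⊗ₜ[K] c')) := by
  simp [kron]

theorem kron_add (T : U₁ ⊗[K] (U₂ ⊗[K] U₃)) (S S' : W₁ ⊗[K] (W₂ ⊗[K] W₃)) :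
    kron K T (S + S') = kron K T S + kron K T S' := by
  simp [kron, TensorProduct.tmul_add]

theorem add_kron (T T' : U₁ ⊗[K] (U₂ ⊗[K] U₃)) (S : W₁ ⊗[K] (W₂ ⊗[K] W₃)) :
    kron K (T + T') S = kron K T S + kron K T' S := by
  simp [kron, TensorProduct.add_tmul]

theorem sum_kron_sum {ι κ : Type*} [Fintype ι] [Fintype κ] (F : ι → U₁ ⊗[K] (U₂ ⊗[K] U₃))
    (G : κ → W₁ ⊗[K] (W₂ ⊗[K] W₃)) :
    kron K (∑ i, F i) (∑ j, G j) = ∑ i, ∑ j, kron K (F i) (G j) := by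
  simp only [kron, TensorProduct.sum_tmul, TensorProduct.tmul_sum, map_sum]
  exact Finset.sum_comm

theorem kron_map_map (φ₁ : V₁ →ₗ[K] U₁) (φ₂ : V₂ →ₗ[K] U₂) (φ₃ : V₃ →ₗ[K] U₃)
    (ψ₁ : X₁ →ₗ[K] W₁) (ψ₂ : X₂ →ₗ[K] W₂) (ψ₃ : X₃ →ₗ[K] W₃)
    (T : V₁ ⊗[K] (V₂ ⊗[K] V₃)) (S : X₁ ⊗[K] (X₂ ⊗[K] X₃)) :
    kron K (TensorProduct.map φ₁ (TensorProduct.map φ₂ φ₃) T)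
        (TensorProduct.map ψ₁ (TensorProduct.map ψ₂ ψ₃) S) =
      TensorProduct.map (TensorProduct.map φ₁ ψ₁)
        (TensorProduct.map (TensorProduct.map φ₂ ψ₂) (TensorProduct.map φ₃ ψ₃)) (kron K T S) := by
  simp only [kron, ← TensorProduct.map_tmul, ← LinearEquiv.coe_coe, ← LinearMap.comp_apply]
  refine LinearMap.congr_fun ?_ (T ⊗ₜ S)
  ext
  rfl

theorem IsRestriction.kron_mono {T : U₁ ⊗[K] (U₂ ⊗[K] U₃)} {S : V₁ ⊗[K] (V₂ ⊗[K] V₃)}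
    {T' : W₁ ⊗[K] (W₂ ⊗[K] W₃)} {S' : X₁ ⊗[K] (X₂ ⊗[K] X₃)}
    (h : IsRestriction K T S) (h' : IsRestriction K T' S') :
    IsRestriction K (kron K T T') (kron K S S') := by
  obtain ⟨φ₁, φ₂, φ₃, rfl⟩ := h
  obtain ⟨ψ₁, ψ₂, ψ₃, rfl⟩ := h'
  rw [kron_map_map]
  exact isRestriction_map _ _ _ _

theorem IsSumRestriction.kron_mono {T : U₁ ⊗[K] (U₂ ⊗[K] U₃)} {S : V₁ ⊗[K] (V₂ ⊗[K] V₃)}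
    {T' : W₁ ⊗[K] (W₂ ⊗[K] W₃)} {S' : X₁ ⊗[K] (X₂ ⊗[K] X₃)} {k l : ℕ}
    (h : IsSumRestriction k T S) (h' : IsSumRestriction l T' S') :
    IsSumRestriction (k * l) (kron K T T') (kron K S S') := by
  obtain ⟨F, rfl, hF⟩ := h
  obtain ⟨G, rfl, hG⟩ := h'
  rw [sum_kron_sum, ← Fintype.sum_prod_type']
  exact isSumRestriction_sum (by simp) fun p ↦ (hF p.1).kron_mono (hG p.2)

theorem IsRestriction.kron_unitTensor {T : U₁ ⊗[K] (U₂ ⊗[K] U₃)} {S : V₁ ⊗[K] (V₂ ⊗[K] V₃)}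
    {r s : ℕ} (hT : IsRestriction K T (unitTensor K r)) (hS : IsRestriction K S (unitTensor K s)) :
    IsRestriction K (kron K T S) (unitTensor K (r * s)) := by
  have kron_one : IsRestriction K (kron K (unitTensor K 1) (unitTensor K 1)) (unitTensor K 1) := by
    simpa [unitTensor, kron_tmul] using isRestriction_tmul_unitTensor_one (K := K) _ _ _
  rw [isRestriction_unitTensor_iff] at *
  simpa using (hT.kron_mono hS).trans kron_one

variable (K) in
/-- The action of the cyclic permutation `(1 2 3)` on the factors of an order-3 tensor. -/
def cyclicShift : U₁ ⊗[K] (U₂ ⊗[K] U₃) ≃ₗ[K] U₂ ⊗[K] (U₃ ⊗[K] U₁) :=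
  TensorProduct.comm K U₁ (U₂ ⊗[K] U₃) ≪≫ₗ TensorProduct.assoc K U₂ U₃ U₁

theorem cyclicShift_tmul (a : U₁) (b : U₂) (c : U₃) :
    cyclicShift K (a ⊗ₜ[K] (b ⊗ₜ[K] c)) = b ⊗ₜ[K] (c ⊗ₜ[K] a) := rfl

theorem cyclicShift_unitTensor (r : ℕ) : cyclicShift K (unitTensor K r) = unitTensor K r := by
  simp only [unitTensor, map_sum, cyclicShift_tmul]

theorem IsRestriction.cyclicShift_mono {T : U₁ ⊗[K] (U₂ ⊗[K] U₃)} {S : V₁ ⊗[K] (V₂ ⊗[K] V₃)}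
    (h : IsRestriction K T S) : IsRestriction K (cyclicShift K T) (cyclicShift K S) := by
  obtain ⟨φ₁, φ₂, φ₃, rfl⟩ := h
  refine ⟨φ₂, φ₃, φ₁, ?_⟩
  simp only [cyclicShift, LinearEquiv.trans_apply, TensorProduct.map_map_assoc,
    TensorProduct.map_comm]

theorem IsSumRestriction.cyclicShift_mono {k : ℕ} {T : U₁ ⊗[K] (U₂ ⊗[K] U₃)}
    {S : V₁ ⊗[K] (V₂ ⊗[K] V₃)} (h : IsSumRestriction k T S) :
    IsSumRestriction k (cyclicShift K T) (cyclicShift K S) := by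
  obtain ⟨F, rfl, hF⟩ := h
  exact ⟨_, map_sum _ _ _, fun i ↦ (hF i).cyclicShift_mono⟩

theorem IsRestriction.cyclicShift_unitTensor {T : U₁ ⊗[K] (U₂ ⊗[K] U₃)} {r : ℕ}
    (h : IsRestriction K T (unitTensor K r)) :
    IsRestriction K (cyclicShift K T) (unitTensor K r) := by
  simpa only [_root_.cyclicShift_unitTensor] using h.cyclicShift_mono

/-- The Kronecker product of the three cyclic permutations of an order-3 tensor. -/
def cyclicCube (T : U₁ ⊗[K] (U₂ ⊗[K] U₃)) :
    ((U₁ ⊗[K] U₂) ⊗[K] U₃) ⊗[K] (((U₂ ⊗[K] U₃) ⊗[K] U₁) ⊗[K] ((U₃ ⊗[K] U₁) ⊗[K] U₂)) :=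
  kron K (kron K T (cyclicShift K T)) (cyclicShift K (cyclicShift K T))

theorem IsSumRestriction.cyclicCube_mono {k : ℕ} {T : U₁ ⊗[K] (U₂ ⊗[K] U₃)}
    {S : V₁ ⊗[K] (V₂ ⊗[K] V₃)} (h : IsSumRestriction k T S) :
    IsSumRestriction (k ^ 3) (cyclicCube T) (cyclicCube S) := by
  rw [pow_succ, sq]
  exact (h.kron_mono h.cyclicShift_mono).kron_mono h.cyclicShift_mono.cyclicShift_mono

theorem IsRestriction.add_unitTensor {A B : U₁ ⊗[K] (U₂ ⊗[K] U₃)} {r s : ℕ}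
    (hA : IsRestriction K A (unitTensor K r)) (hB : IsRestriction K B (unitTensor K s)) :
    IsRestriction K (A + B) (unitTensor K (r + s)) :=
  isRestriction_unitTensor_iff.2 <|
    (isRestriction_unitTensor_iff.1 hA).add (isRestriction_unitTensor_iff.1 hB)

theorem IsSumRestriction.trans_unitTensor {T : U₁ ⊗[K] (U₂ ⊗[K] U₃)} {S : V₁ ⊗[K] (V₂ ⊗[K] V₃)}
    {k r : ℕ} (hTS : IsSumRestriction k T S) (hS : IsRestriction K S (unitTensor K r)) :
    IsRestriction K T (unitTensor K (k * r)) :=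
  isRestriction_unitTensor_iff.2 <| hTS.trans (isRestriction_unitTensor_iff.1 hS)

theorem IsRestriction.cyclicCube_add {A B : U₁ ⊗[K] (U₂ ⊗[K] U₃)} {m l q : ℕ}
    (hA : IsRestriction K A (unitTensor K m)) (hB : IsRestriction K B (unitTensor K l))
    (hcube : IsRestriction K (cyclicCube B) (unitTensor K q)) :
    IsRestriction K (cyclicCube (A + B))
      (unitTensor K (m ^ 3 + 3 * m ^ 2 * l + 3 * m * l ^ 2 + q)) := by
  have hA' := hA.cyclicShift_unitTensor
  have hA'' := hA'.cyclicShift_unitTensor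
  have hB' := hB.cyclicShift_unitTensor
  have hB'' := hB'.cyclicShift_unitTensor
  have hAAA := (hA.kron_unitTensor hA').kron_unitTensor hA''
  have hBAA := (hB.kron_unitTensor hA').kron_unitTensor hA''
  have hABA := (hA.kron_unitTensor hB').kron_unitTensor hA''
  have hBBA := (hB.kron_unitTensor hB').kron_unitTensor hA''
  have hAAB := (hA.kron_unitTensor hA').kron_unitTensor hB''
  have hBAB := (hB.kron_unitTensor hA').kron_unitTensor hB''
  have hABB := (hA.kron_unitTensor hB').kron_unitTensor hB''
  rw [show m ^ 3 + 3 * m ^ 2 * l + 3 * m * l ^ 2 + q =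
    m * m * m + l * m * m + (m * l * m + l * l * m) +
      (m * m * l + l * m * l + (m * l * l + q)) by ring]
  simp only [cyclicCube, map_add, kron_add, add_kron]
  exact ((hAAA.add_unitTensor hBAA).add_unitTensor (hABA.add_unitTensor hBBA)).add_unitTensor
    ((hAAB.add_unitTensor hBAB).add_unitTensor (hABB.add_unitTensor hcube))

set_option maxHeartbeats 1000000 in
-- Elaborating the module structures behind `dsum` and `copies` is slow.
theorem IsRestriction.cyclicCube_dsum {T : U₁ ⊗[K] (U₂ ⊗[K] U₃)} {S : V₁ ⊗[K] (V₂ ⊗[K] V₃)}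
    {m k l q : ℕ} (hT : IsRestriction K T (dsum K (copies K m (unitTensor K 1)) (copies K k S)))
    (hS : IsRestriction K S (unitTensor K l))
    (hcube : IsRestriction K (cyclicCube S) (unitTensor K q)) :
    IsRestriction K (cyclicCube T)
      (unitTensor K (m ^ 3 + 3 * m ^ 2 * (k * l) + 3 * m * (k * l) ^ 2 + k ^ 3 * q)) := by
  obtain ⟨A, B, rfl, hA, hB⟩ := hT.exists_add_of_dsum
  have hA := isRestriction_unitTensor_iff.2 hA.isSumRestriction_of_copies
  have hB := hB.isSumRestriction_of_copies
  exact hA.cyclicCube_add (hB.trans_unitTensor hS) (hB.cyclicCube_mono.trans_unitTensor hcube)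

end Restriction

section MatMul

variable {K : Type} [Field K]

theorem matMulTensor_eq_sum_prod (n m p : ℕ) :
    matMulTensor K n m p = ∑ x : Fin n × Fin m × Fin p,
      Matrix.single x.1 x.2.1 (1 : K) ⊗ₜ[K]
        (Matrix.single x.2.1 x.2.2 (1 : K) ⊗ₜ[K] Matrix.single x.2.2 x.1 (1 : K)) := by
  simp only [matMulTensor, Fintype.sum_prod_type]

theorem isRestriction_matMulTensor_unitTensor (n m p : ℕ) :
    IsRestriction K (matMulTensor K n m p) (unitTensor K (n * m * p)) := by
  rw [matMulTensor_eq_sum_prod, isRestriction_unitTensor_iff]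
  exact isSumRestriction_sum (by simp [mul_assoc]) fun _ ↦ isRestriction_tmul_unitTensor_one _ _ _

theorem isRestriction_matMulTensor_two_unitTensor_seven :
    IsRestriction K (matMulTensor K 2 2 2) (unitTensor K 7) := by
  let e (i j : Fin 2) : Matrix (Fin 2) (Fin 2) K := Matrix.single i j 1
  let u := ![e 0 0 + e 1 1, e 1 0 + e 1 1, e 0 0, e 1 1, e 0 0 + e 0 1, e 1 0 - e 0 0,
    e 0 1 - e 1 1]
  let v := ![e 0 0 + e 1 1, e 0 0, e 0 1 - e 1 1, e 1 0 - e 0 0, e 1 1, e 0 0 + e 0 1,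
    e 1 0 + e 1 1]
  let w := ![e 0 0 + e 1 1, e 0 1 - e 1 1, e 1 0 + e 1 1, e 0 0 + e 0 1, e 1 0 - e 0 0, e 1 1,
    e 0 0]
  have strassen : matMulTensor K 2 2 2 = ∑ i, u i ⊗ₜ[K] (v i ⊗ₜ[K] w i) := by
    simp only [matMulTensor, Fin.sum_univ_two, Fin.sum_univ_seven, u, v, w, Matrix.cons_val]
    simp only [TensorProduct.tmul_add, TensorProduct.add_tmul, TensorProduct.tmul_sub,
      TensorProduct.sub_tmul, e]
    abel
  rw [strassen, isRestriction_unitTensor_iff]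
  exact isSumRestriction_sum (Fintype.card_fin 7) fun _ ↦ isRestriction_tmul_unitTensor_one _ _ _

theorem cyclicShift_matMulTensor (n m p : ℕ) :
    cyclicShift K (matMulTensor K n m p) = matMulTensor K m p n := by
  simp only [matMulTensor, map_sum, cyclicShift_tmul]
  rw [Finset.sum_comm]
  exact Finset.sum_congr rfl fun _ _ ↦ Finset.sum_comm

/-- The Kronecker product of matrices as an isomorphism, with pairs of indices encoded by
`finProdFinEquiv`. -/
def kroneckerFin (K : Type) [Field K] (n m n' m' : ℕ) :
    Matrix (Fin n) (Fin m) K ⊗[K] Matrix (Fin n') (Fin m') K ≃ₗ[K]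
      Matrix (Fin (n * n')) (Fin (m * m')) K :=
  kroneckerLinearEquiv (Fin n) (Fin m) (Fin n') (Fin m') K ≪≫ₗ
    Matrix.reindexLinearEquiv K K finProdFinEquiv finProdFinEquiv

theorem kroneckerFin_single_tmul_single {n m n' m' : ℕ} (i : Fin n) (j : Fin m) (i' : Fin n')
    (j' : Fin m') (a b : K) :
    kroneckerFin K n m n' m' (Matrix.single i j a ⊗ₜ Matrix.single i' j' b) =
      Matrix.single (finProdFinEquiv (i, i')) (finProdFinEquiv (j, j')) (a * b) := by
  simp [kroneckerFin, Matrix.single_kronecker_single]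

theorem map_kroneckerFin_kron_matMulTensor (n m p n' m' p' : ℕ) :
    TensorProduct.map (kroneckerFin K n m n' m').toLinearMap
        (TensorProduct.map (kroneckerFin K m p m' p').toLinearMap
          (kroneckerFin K p n p' n').toLinearMap)
        (kron K (matMulTensor K n m p) (matMulTensor K n' m' p')) =
      matMulTensor K (n * n') (m * m') (p * p') := by
  let e : (Fin n × Fin m × Fin p) × (Fin n' × Fin m' × Fin p') ≃
      Fin (n * n') × Fin (m * m') × Fin (p * p') :=
    (Equiv.prodProdProdComm _ _ _ _).trans <| finProdFinEquiv.prodCongr <|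
      (Equiv.prodProdProdComm _ _ _ _).trans <| finProdFinEquiv.prodCongr finProdFinEquiv
  rw [matMulTensor_eq_sum_prod (n * n'), ← e.sum_comp]
  simp only [matMulTensor_eq_sum_prod, sum_kron_sum, ← Fintype.sum_prod_type', map_sum, kron_tmul,
    TensorProduct.map_tmul, LinearEquiv.coe_coe, kroneckerFin_single_tmul_single, mul_one]
  rfl

theorem isRestriction_kron_matMulTensor (n m p n' m' p' : ℕ) :
    IsRestriction K (kron K (matMulTensor K n m p) (matMulTensor K n' m' p'))
      (matMulTensor K (n * n') (m * m') (p * p')) := by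
  refine ⟨(kroneckerFin K n m n' m').symm, (kroneckerFin K m p m' p').symm,
    (kroneckerFin K p n p' n').symm, ?_⟩
  rw [← map_kroneckerFin_kron_matMulTensor]
  simp [← LinearMap.comp_apply, ← TensorProduct.map_comp]

theorem isRestriction_matMulTensor_kron (n m p n' m' p' : ℕ) :
    IsRestriction K (matMulTensor K (n * n') (m * m') (p * p'))
      (kron K (matMulTensor K n m p) (matMulTensor K n' m' p')) :=
  ⟨_, _, _, (map_kroneckerFin_kron_matMulTensor n m p n' m' p').symm⟩

theorem isRestriction_cyclicCube_matMulTensor (n m p : ℕ) :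
    IsRestriction K (cyclicCube (matMulTensor K n m p))
      (matMulTensor K (n * m * p) (m * p * n) (p * n * m)) := by
  simp only [cyclicCube, cyclicShift_matMulTensor]
  exact ((isRestriction_kron_matMulTensor ..).kron_mono (isRestriction_refl _)).trans
    (isRestriction_kron_matMulTensor ..)

theorem isRestriction_matMulTensor_cyclicCube (n m p : ℕ) :
    IsRestriction K (matMulTensor K (n * m * p) (m * p * n) (p * n * m))
      (cyclicCube (matMulTensor K n m p)) := by
  simp only [cyclicCube, cyclicShift_matMulTensor]
  exact (isRestriction_matMulTensor_kron ..).trans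
    ((isRestriction_matMulTensor_kron ..).kron_mono (isRestriction_refl _))

end MatMul

set_option maxHeartbeats 1000000 in
-- Elaborating the module structures behind `dsum` and `copies` is slow.
theorem six_cubed_restriction_general (K : Type) [Field K] {n m p n' m' p' a k q : ℕ}
    (h : IsRestriction K (matMulTensor K n m p)
      (dsum K (copies K a (unitTensor K 1)) (copies K k (matMulTensor K n' m' p'))))
    (hq : IsRestriction K (matMulTensor K (n' * m' * p') (m' * p' * n') (p' * n' * m'))
      (unitTensor K q)) :
    IsRestriction K (matMulTensor K (n * m * p) (m * p * n) (p * n * m))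
      (unitTensor K (a ^ 3 + 3 * a ^ 2 * (k * (n' * m' * p')) + 3 * a * (k * (n' * m' * p')) ^ 2 +
        k ^ 3 * q)) :=
  (isRestriction_matMulTensor_cyclicCube n m p).trans <|
    h.cyclicCube_dsum (isRestriction_matMulTensor_unitTensor n' m' p') <|
      (isRestriction_cyclicCube_matMulTensor n' m' p').trans hq

set_option maxHeartbeats 2000000 in
/-- if `⟨6,6,6⟩ ≤ 137 ⊙ ⟨1⟩ ⊕ 8 ⊙ ⟨1,1,2⟩`, then
`⟨216,216,216⟩ ≤ ⟨3581065⟩`. -/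
theorem six_cubed_restriction (K : Type) [Field K]
    (h : IsRestriction K (matMulTensor K 6 6 6)
      (dsum K (copies K 137 (unitTensor K 1)) (copies K 8 (matMulTensor K 1 1 2)))) :
    IsRestriction K (matMulTensor K 216 216 216) (unitTensor K 3581065) := by
  rw [show 3581065 = 137 ^ 3 + 3 * 137 ^ 2 * (8 * (1 * 1 * 2)) +
    3 * 137 * (8 * (1 * 1 * 2)) ^ 2 + 8 ^ 3 * 7 by norm_num]
  exact six_cubed_restriction_general K (n := 6) (m := 6) (p := 6) h
    isRestriction_matMulTensor_two_unitTensor_seven
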